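/- Assume 𝒱 ≠ {0} and suppose condition (i) fails, i.e., ker(B) ∩ ker(D) ⊆ ker(F). Then condition (ii) holds for some friend if and only if it holds for every friend: there exists (M̂,N̂) ∈ ℱ(𝒱) with L_{(M̂,N̂)} ≠ 0 if and only if L_{(M,N)} ≠ 0 for all (M,N) ∈ ℱ(𝒱), where L_{(M,N)} := [(E+FM)(A+BM)^{n−1}BN, …, (E+FM)BN, FN]. -/

import Mathlib

/-!
Let `S = ker D ⊓ B⁻¹ V`. For a friend `(M, N)` the columns of `N` lie in `S`, and
`S = Im N + (ker B ⊓ ker D)`; hence, as `ker B ⊓ ker D ≤ ker F`, the equation `F N = 0` is equivalent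
to `F S = 0`. Moreover, two friends satisfy `(M' - M) V ⊆ S`.

If `L_{(M,N)} = 0`, then by Cayley–Hamilton `(E + F M) (A + B M) ^ j` kills `B S` for every `j`, so
`B S` is contained in `Q = {x ∈ V | ∀ j, (E + F M) (A + B M) ^ j x = 0}`. Since `A + B M'` differs from
`A + B M` on `V` by a map into `B S ⊆ Q`, the space `Q` is also `(A + B M')`-invariant; and
`E + F M' = E + F M = 0` on `Q` because `F S = 0`. Thus `L_{(M',N')} = 0` for every friend `(M', N')`
(`friend_transfer`). This proves one implication; the other only needs the existence of a friend
(`exists_isFriend`).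
-/

open Matrix

noncomputable section

/-- The linear map between Euclidean spaces induced by a real matrix. -/
def matL {ι κ : Type*} [Fintype ι] [Fintype κ] [DecidableEq κ]
    (A : Matrix ι κ ℝ) : EuclideanSpace ℝ κ →ₗ[ℝ] EuclideanSpace ℝ ι :=
  Matrix.toEuclideanLin A

variable {ι κ ρ σ : Type*} [Fintype ι] [DecidableEq ι] [Fintype κ] [DecidableEq κ]
  [Fintype ρ] [DecidableEq ρ] [Fintype σ] [DecidableEq σ]

/-- State trajectory of `x_{k+1} = A x_k + B a_k` from initial state `x0`
and input sequence `a`. -/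
def stateTraj (A : Matrix ι ι ℝ) (B : Matrix ι κ ℝ)
    (x0 : EuclideanSpace ℝ ι) (a : ℕ → EuclideanSpace ℝ κ) :
    ℕ → EuclideanSpace ℝ ι
  | 0 => x0
  | k + 1 => matL A (stateTraj A B x0 a k) + matL B (a k)

/-- Output trajectory `y_k = C x_k + D a_k` of the system. -/
def outTraj (A : Matrix ι ι ℝ) (B : Matrix ι κ ℝ)
    (C : Matrix ρ ι ℝ) (D : Matrix ρ κ ℝ)
    (x0 : EuclideanSpace ℝ ι) (a : ℕ → EuclideanSpace ℝ κ) (k : ℕ) :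
    EuclideanSpace ℝ ρ :=
  matL C (stateTraj A B x0 a k) + matL D (a k)

/-- `W` is an output-nulling subspace for the system `(A,B,C,D)`. -/
def IsOutputNulling (A : Matrix ι ι ℝ) (B : Matrix ι κ ℝ)
    (C : Matrix ρ ι ℝ) (D : Matrix ρ κ ℝ)
    (W : Submodule ℝ (EuclideanSpace ℝ ι)) : Prop :=
  ∃ M : Matrix κ ι ℝ,
    (∀ v ∈ W, matL (A + B * M) v ∈ W) ∧ (∀ v ∈ W, matL (C + D * M) v = 0)

/-- `V` is the maximal output-nulling subspace for the system `(A,B,C,D)`. -/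
def IsMaxOutputNulling (A : Matrix ι ι ℝ) (B : Matrix ι κ ℝ)
    (C : Matrix ρ ι ℝ) (D : Matrix ρ κ ℝ)
    (V : Submodule ℝ (EuclideanSpace ℝ ι)) : Prop :=
  IsOutputNulling A B C D V ∧
    ∀ W : Submodule ℝ (EuclideanSpace ℝ ι), IsOutputNulling A B C D W → W ≤ V

/-- `(M, N)` is a friend of the (maximal output-nulling) subspace `V`. -/
def IsFriend (A : Matrix ι ι ℝ) (B : Matrix ι κ ℝ)
    (C : Matrix ρ ι ℝ) (D : Matrix ρ κ ℝ)
    (V : Submodule ℝ (EuclideanSpace ℝ ι))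
    (M : Matrix κ ι ℝ) (N : Matrix κ σ ℝ) : Prop :=
  (∀ v ∈ V, matL (A + B * M) v ∈ V) ∧
  (∀ v ∈ V, matL (C + D * M) v = 0) ∧
  (LinearMap.range (matL N) ≤ LinearMap.ker (matL D)) ∧
  (LinearMap.range (matL (B * N)) =
    (LinearMap.ker (matL D)).map (matL B) ⊓ V)

lemma matL_add_mul_apply (A : Matrix ρ ι ℝ) (B : Matrix ρ κ ℝ) (M : Matrix κ ι ℝ)
    (x : EuclideanSpace ℝ ι) : matL (A + B * M) x = matL A x + matL B (matL M x) := by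
  ext i
  simp [matL, Matrix.mulVec_mulVec]

lemma matL_mul_apply (B : Matrix ρ κ ℝ) (M : Matrix κ ι ℝ)
    (x : EuclideanSpace ℝ ι) : matL (B * M) x = matL B (matL M x) := by
  ext i
  simp [matL, Matrix.mulVec_mulVec]

lemma matL_eq_zero_iff (A : Matrix ρ ι ℝ) : A = 0 ↔ ∀ x, matL A x = 0 := by
  constructor
  · rintro rfl x
    simp [matL]
  · intro h
    have h0 : Matrix.toEuclideanLin A = 0 := LinearMap.ext h
    simpa using h0

/-- Cayley–Hamilton: the powers `K ^ j` with `j < n` determine the vanishing of `G K ^ j H` for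
all `j`. -/
lemma mul_pow_mul_eq_zero {n : ℕ} (K : Matrix (Fin n) (Fin n) ℝ) (G : Matrix ρ (Fin n) ℝ)
    (H : Matrix (Fin n) σ ℝ) (h : ∀ j < n, G * K ^ j * H = 0) (j : ℕ) : G * K ^ j * H = 0 := by
  rw [Matrix.pow_eq_aeval_mod_charpoly K j]
  rcases Nat.eq_zero_or_pos n with rfl | hn
  · have : G = 0 := by
      ext a b
      exact b.elim0
    simp [this]
  · have hd : (Polynomial.X ^ j %ₘ K.charpoly).natDegree < n := by
      have h1 := Polynomial.natDegree_modByMonic_lt (Polynomial.X ^ j) K.charpoly_monic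
        (by
          intro h1
          have := K.charpoly_natDegree_eq_dim
          rw [h1] at this
          simp at this
          omega)
      simpa [K.charpoly_natDegree_eq_dim] using h1
    rw [Polynomial.aeval_eq_sum_range' hd, Matrix.mul_sum, Matrix.sum_mul]
    refine Finset.sum_eq_zero fun i hi => ?_
    rw [Matrix.mul_smul, Matrix.smul_mul, h i (Finset.mem_range.mp hi), smul_zero]

/-- The vanishing of `L_{(M,N)}` passes from one friend to any other. -/
lemma friend_transfer {n m p r s s' : ℕ}
    {A : Matrix (Fin n) (Fin n) ℝ} {B : Matrix (Fin n) (Fin m) ℝ}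
    {C : Matrix (Fin p) (Fin n) ℝ} {D : Matrix (Fin p) (Fin m) ℝ}
    {E : Matrix (Fin r) (Fin n) ℝ} {F : Matrix (Fin r) (Fin m) ℝ}
    {V : Submodule ℝ (EuclideanSpace ℝ (Fin n))}
    (hi : LinearMap.ker (matL B) ⊓ LinearMap.ker (matL D) ≤ LinearMap.ker (matL F))
    {M M' : Matrix (Fin m) (Fin n) ℝ} {N : Matrix (Fin m) (Fin s) ℝ}
    {N' : Matrix (Fin m) (Fin s') ℝ}
    (h : IsFriend A B C D V M N) (hfr : IsFriend A B C D V M' N')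
    (hF : F * N = 0) (hL : ∀ j < n, (E + F * M) * (A + B * M) ^ j * (B * N) = 0) :
    F * N' = 0 ∧ ∀ j, (E + F * M') * (A + B * M') ^ j * (B * N') = 0 := by
  obtain ⟨hA, hC, hN, hB⟩ := h
  obtain ⟨hA', hC', hN', hB'⟩ := hfr
  -- an input in `ker D ⊓ B⁻¹ V` agrees with some `N w` up to `ker B ⊓ ker D`
  have key : ∀ u, matL D u = 0 → matL B u ∈ V →
      matL F u = 0 ∧ ∃ w, matL B u = matL (B * N) w := by
    intro u hu hBu
    have hmem : matL B u ∈ LinearMap.range (matL (B * N)) := by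
      rw [hB]
      exact ⟨⟨u, hu, rfl⟩, hBu⟩
    obtain ⟨w, hw⟩ := hmem
    refine ⟨?_, w, hw.symm⟩
    have hDw : matL D (matL N w) = 0 := hN ⟨w, rfl⟩
    have hFw : matL F (matL N w) = 0 := by
      rw [← matL_mul_apply, (matL_eq_zero_iff _).1 hF]
    have hd : u - matL N w ∈ LinearMap.ker (matL F) := by
      apply hi
      rw [matL_mul_apply] at hw
      simp [Submodule.mem_inf, map_sub, hw, hu, hDw]
    simpa [map_sub, hFw] using hd
  have hS' : ∀ w, matL D (matL N' w) = 0 ∧ matL B (matL N' w) ∈ V := by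
    intro w
    refine ⟨hN' ⟨w, rfl⟩, ?_⟩
    have hmem : matL (B * N') w ∈ LinearMap.range (matL (B * N')) := ⟨w, rfl⟩
    rw [hB', matL_mul_apply] at hmem
    exact hmem.2
  have hdiff : ∀ x ∈ V, matL D (matL M' x - matL M x) = 0 ∧
      matL B (matL M' x - matL M x) ∈ V := by
    intro x hx
    have h1 := hC x hx
    have h2 := hC' x hx
    have h3 := V.sub_mem (hA' x hx) (hA x hx)
    rw [matL_add_mul_apply] at h1 h2
    rw [matL_add_mul_apply, matL_add_mul_apply, add_sub_add_left_eq_sub, ← map_sub] at h3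
    refine ⟨?_, h3⟩
    rw [map_sub, sub_eq_zero]
    exact add_left_cancel (h2.trans h1.symm)
  -- `Q x` says that `x` is in `V` and unobservable for the closed loop given by `M`
  let Q : EuclideanSpace ℝ (Fin n) → Prop := fun x =>
    x ∈ V ∧ ∀ j, matL ((E + F * M) * (A + B * M) ^ j) x = 0
  have hQS : ∀ u, matL D u = 0 → matL B u ∈ V → Q (matL B u) := by
    intro u hu hBu
    refine ⟨hBu, fun j => ?_⟩
    obtain ⟨-, w, hw⟩ := key u hu hBu
    rw [hw, ← matL_mul_apply]
    exact (matL_eq_zero_iff _).1 (mul_pow_mul_eq_zero _ _ _ hL j) w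
  have hQstep : ∀ x, Q x → Q (matL (A + B * M') x) := by
    rintro x ⟨hxV, hx⟩
    refine ⟨hA' x hxV, fun j => ?_⟩
    have hsplit : matL (A + B * M') x =
        matL (A + B * M) x + matL B (matL M' x - matL M x) := by
      rw [matL_add_mul_apply, matL_add_mul_apply, map_sub]
      abel
    obtain ⟨hd1, hd2⟩ := hdiff x hxV
    rw [hsplit, map_add, (hQS _ hd1 hd2).2 j, add_zero, ← matL_mul_apply, Matrix.mul_assoc,
      ← pow_succ]
    exact hx (j + 1)
  have hQout : ∀ x, Q x → matL (E + F * M') x = 0 := by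
    rintro x ⟨hxV, hx⟩
    have h0 : matL (E + F * M) x = 0 := by simpa using hx 0
    obtain ⟨hd1, hd2⟩ := hdiff x hxV
    have h1 := (key _ hd1 hd2).1
    rw [map_sub, sub_eq_zero] at h1
    rw [matL_add_mul_apply] at h0 ⊢
    rw [h1, h0]
  have hQpow : ∀ j x, Q x → Q (matL ((A + B * M') ^ j) x) := by
    intro j
    induction j with
    | zero => intro x hx; simpa [matL] using hx
    | succ j ih =>
      intro x hx
      rw [pow_succ, matL_mul_apply]
      exact ih _ (hQstep x hx)
  refine ⟨(matL_eq_zero_iff _).2 fun w => ?_, fun j => (matL_eq_zero_iff _).2 fun w => ?_⟩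
  · rw [matL_mul_apply]
    exact (key _ (hS' w).1 (hS' w).2).1
  · rw [matL_mul_apply, matL_mul_apply, matL_mul_apply]
    exact hQout _ (hQpow j _ (hQS _ (hS' w).1 (hS' w).2))

/-- An output-nulling subspace has a friend: `N` may be taken to be a projection onto
`ker D ⊓ B⁻¹ V`. -/
lemma exists_isFriend {n m p : ℕ}
    {A : Matrix (Fin n) (Fin n) ℝ} {B : Matrix (Fin n) (Fin m) ℝ}
    {C : Matrix (Fin p) (Fin n) ℝ} {D : Matrix (Fin p) (Fin m) ℝ}
    {V : Submodule ℝ (EuclideanSpace ℝ (Fin n))} (hV : IsOutputNulling A B C D V) :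
    ∃ (M : Matrix (Fin m) (Fin n) ℝ) (N : Matrix (Fin m) (Fin m) ℝ),
      IsFriend A B C D V M N := by
  obtain ⟨M, hA, hC⟩ := hV
  let S := LinearMap.ker (matL D) ⊓ V.comap (matL B)
  obtain ⟨f, hf⟩ := S.subtype.exists_leftInverse_of_injective S.ker_subtype
  obtain ⟨N, hN⟩ := (Matrix.toEuclideanLin (𝕜 := ℝ) (m := Fin m) (n := Fin m)).surjective
    (S.subtype ∘ₗ f)
  have hNa : ∀ w, matL N w = f w := fun w => LinearMap.congr_fun hN w
  have hfS : ∀ u : S, f u = u := fun u => LinearMap.congr_fun hf u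
  refine ⟨M, N, hA, hC, ?_, le_antisymm ?_ ?_⟩
  · rintro _ ⟨w, rfl⟩
    rw [hNa]
    exact (f w).2.1
  · rintro _ ⟨w, rfl⟩
    rw [matL_mul_apply, hNa]
    exact ⟨⟨_, (f w).2.1, rfl⟩, (f w).2.2⟩
  · rintro _ ⟨⟨u, hu, rfl⟩, huV⟩
    refine ⟨u, ?_⟩
    rw [matL_mul_apply, hNa, hfS ⟨u, hu, huV⟩]

/-- Proposition 1 of the paper: when condition (i) fails, condition (ii) of
Theorem 1 holds for some friend iff it holds for every friend. -/
theorem condition_ii_friend_independence {n m p r : ℕ}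
    (A : Matrix (Fin n) (Fin n) ℝ) (B : Matrix (Fin n) (Fin m) ℝ)
    (C : Matrix (Fin p) (Fin n) ℝ) (D : Matrix (Fin p) (Fin m) ℝ)
    (E : Matrix (Fin r) (Fin n) ℝ) (F : Matrix (Fin r) (Fin m) ℝ)
    (V : Submodule ℝ (EuclideanSpace ℝ (Fin n)))
    (hV : IsMaxOutputNulling A B C D V) (hVne : V ≠ ⊥)
    (hi : LinearMap.ker (matL B) ⊓ LinearMap.ker (matL D) ≤
      LinearMap.ker (matL F)) :
    (∃ (s : ℕ) (Mh : Matrix (Fin m) (Fin n) ℝ) (Nh : Matrix (Fin m) (Fin s) ℝ),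
      IsFriend A B C D V Mh Nh ∧
      (F * Nh ≠ 0 ∨
        ∃ j : ℕ, j < n ∧ (E + F * Mh) * (A + B * Mh) ^ j * (B * Nh) ≠ 0)) ↔
    (∀ (s : ℕ) (M : Matrix (Fin m) (Fin n) ℝ) (N : Matrix (Fin m) (Fin s) ℝ),
      IsFriend A B C D V M N →
      (F * N ≠ 0 ∨
        ∃ j : ℕ, j < n ∧ (E + F * M) * (A + B * M) ^ j * (B * N) ≠ 0)) := by
  constructor
  · rintro ⟨s', M', N', hfr', hne⟩ s M N hfr
    by_contra! hzero
    obtain ⟨h1, h2⟩ := friend_transfer hi hfr hfr' hzero.1 hzero.2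
    rcases hne with hne | ⟨j, -, hne⟩
    · exact hne h1
    · exact hne (h2 j)
  · intro hall
    obtain ⟨M, N, hfr⟩ := exists_isFriend hV.1
    exact ⟨m, M, N, hfr, hall m M N hfr⟩
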